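/- Let n, m ∈ ℕ, t ≥ 0, K ∈ ℝ. Let A : [t,∞) → ℝ^{n×n}, B : [t,∞) → ℝ^{n×m}, Q : [t,∞) → Sym_n(ℝ), R : [t,∞) → Sym_m(ℝ) be measurable with uniformly bounded operator norms, with Q(s) ⪰ 0 and R(s) ⪰ δI_m for some δ > 0 and almost every s. Let x, y : [t,∞) → ℝ^n be locally absolutely continuous with x'(s) = A(s)x(s) − B(s)R(s)^{-1}B(s)ᵀ y(s) and y'(s) = −((2K)I + A(s))ᵀ y(s) − Q(s)x(s) for almost every s ≥ t, with x, y ∈ L^{2,K}(t,∞;ℝ^n) and lim_{T→∞} e^{2KT}⟨x(T), y(T)⟩ = 0. Then ∫_t^∞ e^{2Ks} ( ⟨Q(s)x(s), x(s)⟩ + ⟨R(s)^{-1}B(s)ᵀ y(s), B(s)ᵀ y(s)⟩ ) ds = e^{2Kt} ⟨x(t), y(t)⟩. -/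

import Mathlib

open MeasureTheory Matrix

/-! Along the Hamiltonian system the terms `⟨A x, y⟩` and `⟨x, Aᵀ y⟩` cancel, and the weight
`e^{cs}` absorbs the term `c ⟨x, y⟩`. Hence `-e^{cs} ⟨x, y⟩` has the weighted energy density as its
a.e. derivative. This density is nonnegative, so the existence of a limit of `-e^{cs} ⟨x, y⟩` at
infinity already forces it to be integrable, and its integral is the total increment. -/

/-- `u` is locally absolutely continuous on `[t, ∞)` with a.e. derivative `u'`. This is encoded as
`u` being an indefinite integral of the locally integrable function `u'`; the values of both
functions to the left of `t` are irrelevant. -/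
structure IsPrimitiveFrom {E : Type*} [NormedAddCommGroup E] [NormedSpace ℝ E] (t : ℝ)
    (u u' : ℝ → E) : Prop where
  integrableOn_Icc : ∀ s, t ≤ s → IntegrableOn u' (Set.Icc t s)
  eq_add_integral : ∀ s, t ≤ s → u s = u t + ∫ r in t..s, u' r

namespace IsPrimitiveFrom

open Set Filter Topology

section NormedSpace

variable {E F : Type*} [NormedAddCommGroup E] [NormedSpace ℝ E] [NormedAddCommGroup F]
  [NormedSpace ℝ F] {t s : ℝ} {u u' : ℝ → E}

lemma intervalIntegrable (hu : IsPrimitiveFrom t u u') (hs : t ≤ s) :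
    IntervalIntegrable u' volume t s :=
  (intervalIntegrable_iff_integrableOn_Icc_of_le hs).2 (hu.integrableOn_Icc s hs)

lemma of_hasDerivAt [CompleteSpace E] (hu : ∀ s, HasDerivAt u (u' s) s) (hu' : Continuous u') :
    IsPrimitiveFrom t u u' where
  integrableOn_Icc _ _ := hu'.integrableOn_Icc
  eq_add_integral s _ := by
    rw [intervalIntegral.integral_eq_sub_of_hasDerivAt (fun r _ => hu r)
      (hu'.intervalIntegrable t s), add_sub_cancel]

lemma clm_comp [CompleteSpace E] [CompleteSpace F] (L : E →L[ℝ] F) (hu : IsPrimitiveFrom t u u') :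
    IsPrimitiveFrom t (fun s => L (u s)) (fun s => L (u' s)) where
  integrableOn_Icc s hs := L.integrable_comp (hu.integrableOn_Icc s hs)
  eq_add_integral s hs := by
    rw [L.intervalIntegral_comp_comm (hu.intervalIntegrable hs), ← map_add,
      ← hu.eq_add_integral s hs]

lemma neg (hu : IsPrimitiveFrom t u u') :
    IsPrimitiveFrom t (fun s => -u s) (fun s => -u' s) where
  integrableOn_Icc s hs := (hu.integrableOn_Icc s hs).neg
  eq_add_integral s hs := by
    rw [intervalIntegral.integral_neg, ← neg_add, ← hu.eq_add_integral s hs]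

lemma sum {ι : Type*} {I : Finset ι} {f f' : ι → ℝ → E}
    (hf : ∀ i ∈ I, IsPrimitiveFrom t (f i) (f' i)) :
    IsPrimitiveFrom t (fun s => ∑ i ∈ I, f i s) (fun s => ∑ i ∈ I, f' i s) where
  integrableOn_Icc s hs := integrable_finsetSum I fun i hi => (hf i hi).integrableOn_Icc s hs
  eq_add_integral s hs := by
    rw [intervalIntegral.integral_finsetSum fun i hi => (hf i hi).intervalIntegrable hs,
      ← Finset.sum_add_distrib]
    exact Finset.sum_congr rfl fun i hi => (hf i hi).eq_add_integral s hs

lemma ae_hasDerivAt [CompleteSpace E] (hu : IsPrimitiveFrom t u u') (hs : t ≤ s) :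
    ∀ᵐ r, r ∈ Ioc t s → HasDerivAt u (u' r) r := by
  -- Lebesgue differentiation on `[t, s + 1]` keeps `s` away from the right endpoint.
  have hint := hu.intervalIntegrable (hs.trans (lt_add_one s).le)
  filter_upwards [hint.ae_hasDerivAt_integral] with r hr hrs
  have hmem : r ∈ uIcc t (s + 1) := by
    rw [uIcc_of_le (hs.trans (lt_add_one s).le)]
    exact ⟨hrs.1.le, hrs.2.trans (lt_add_one s).le⟩
  refine ((hr hmem t left_mem_uIcc).const_add (u t)).congr_of_eventuallyEq ?_
  filter_upwards [Ioi_mem_nhds hrs.1] with q hq using hu.eq_add_integral q hq.le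

lemma tendsto_intervalIntegral (hu : IsPrimitiveFrom t u u') {l : E}
    (hlim : Tendsto u atTop (𝓝 l)) :
    Tendsto (fun s => ∫ r in t..s, u' r) atTop (𝓝 (l - u t)) := by
  refine (hlim.sub_const (u t)).congr' ?_
  filter_upwards [eventually_ge_atTop t] with s hs
  rw [hu.eq_add_integral s hs, add_sub_cancel_left]

lemma integral_Ici_of_tendsto (hu : IsPrimitiveFrom t u u') (hint : IntegrableOn u' (Ici t))
    {l : E} (hlim : Tendsto u atTop (𝓝 l)) : ∫ s in Ici t, u' s = l - u t := by
  rw [integral_Ici_eq_integral_Ioi]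
  exact tendsto_nhds_unique
    (intervalIntegral_tendsto_integral_Ioi t (hint.mono_set Ioi_subset_Ici_self) tendsto_id)
    (hu.tendsto_intervalIntegral hlim)

end NormedSpace

section Real

variable {t s : ℝ} {u v u' v' : ℝ → ℝ}

lemma integrableOn_Ici_of_nonneg (hu : IsPrimitiveFrom t u u')
    (hnonneg : ∀ᵐ s ∂volume.restrict (Ici t), 0 ≤ u' s) {l : ℝ} (hlim : Tendsto u atTop (𝓝 l)) :
    IntegrableOn u' (Ici t) := by
  have hnorm : ∀ s, t ≤ s → ∫ r in t..s, ‖u' r‖ = ∫ r in t..s, u' r := fun s hs => by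
    refine intervalIntegral.integral_congr_ae_restrict ?_
    rw [uIoc_of_le hs]
    filter_upwards [ae_restrict_of_ae_restrict_of_subset
      (Ioc_subset_Icc_self.trans Icc_subset_Ici_self) hnonneg] with r hr
    exact Real.norm_of_nonneg hr
  rw [integrableOn_Ici_iff_integrableOn_Ioi]
  refine integrableOn_Ioi_of_intervalIntegral_norm_tendsto (l - u t) t (b := fun s => max t s)
    (fun s => (hu.integrableOn_Icc _ (le_max_left t s)).mono_set Ioc_subset_Icc_self)
    (tendsto_atTop_mono (le_max_right t) tendsto_id) ?_
  refine (hu.tendsto_intervalIntegral hlim).congr' ?_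
  filter_upwards [eventually_ge_atTop t] with s hs
  rw [max_eq_right hs, hnorm s hs]

lemma absolutelyContinuousOnInterval (hu : IsPrimitiveFrom t u u') (hs : t ≤ s) :
    AbsolutelyContinuousOnInterval u t s := by
  have hprim : AbsolutelyContinuousOnInterval (fun r => ∫ q in t..r, u' q) t s :=
    (hu.intervalIntegrable hs).absolutelyContinuousOnInterval_intervalIntegral left_mem_uIcc
  have hdist : ∀ a ∈ uIcc t s, ∀ b ∈ uIcc t s,
      dist (∫ q in t..a, u' q) (∫ q in t..b, u' q) = dist (u a) (u b) := by
    rw [uIcc_of_le hs]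
    intro a ha b hb
    rw [hu.eq_add_integral a ha.1, hu.eq_add_integral b hb.1, dist_add_left]
  refine hprim.congr' (eventually_inf_principal.2 <| .of_forall fun P hP => ?_)
  obtain ⟨hmem, -⟩ := hP
  refine Finset.sum_congr rfl fun i hi => ?_
  obtain ⟨ha, hb⟩ := hmem i hi
  exact hdist _ ha _ hb

lemma mul (hu : IsPrimitiveFrom t u u') (hv : IsPrimitiveFrom t v v') :
    IsPrimitiveFrom t (fun s => u s * v s) (fun s => u' s * v s + u s * v' s) where
  integrableOn_Icc s hs := by
    have huc := (hu.absolutelyContinuousOnInterval hs).continuousOn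
    have hvc := (hv.absolutelyContinuousOnInterval hs).continuousOn
    exact (intervalIntegrable_iff_integrableOn_Icc_of_le hs).1 <|
      ((hu.intervalIntegrable hs).mul_continuousOn hvc).add
        ((hv.intervalIntegrable hs).continuousOn_mul huc)
  eq_add_integral s hs := by
    rw [← sub_eq_iff_eq_add', ← (hu.absolutelyContinuousOnInterval hs).integral_deriv_mul_eq_sub
      (hv.absolutelyContinuousOnInterval hs)]
    refine intervalIntegral.integral_congr_ae ?_
    rw [uIoc_of_le hs]
    filter_upwards [hu.ae_hasDerivAt hs, hv.ae_hasDerivAt hs] with r hur hvr hr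
    rw [(hur hr).deriv, (hvr hr).deriv]

lemma dotProduct {ι : Type*} [Fintype ι] {x y x' y' : ℝ → ι → ℝ}
    (hx : IsPrimitiveFrom t x x') (hy : IsPrimitiveFrom t y y') :
    IsPrimitiveFrom t (fun s => x s ⬝ᵥ y s) (fun s => x' s ⬝ᵥ y s + x s ⬝ᵥ y' s) := by
  simpa only [_root_.dotProduct, ← Finset.sum_add_distrib] using! sum fun i _ =>
    (hx.clm_comp (ContinuousLinearMap.proj i)).mul (hy.clm_comp (ContinuousLinearMap.proj i))

end Real

end IsPrimitiveFrom

section Hamiltonian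

variable {k l : Type*} [Fintype k] [DecidableEq k] [Fintype l]

lemma inv_mulVec_dotProduct_nonneg {M : Matrix k k ℝ} (hM : ∀ v, 0 ≤ (M *ᵥ v) ⬝ᵥ v)
    (w : k → ℝ) : 0 ≤ (M⁻¹ *ᵥ w) ⬝ᵥ w := by
  by_cases hdet : IsUnit M.det
  · simpa only [mulVec_mulVec, mul_nonsing_inv _ hdet, one_mulVec, dotProduct_comm w]
      using hM (M⁻¹ *ᵥ w)
  · rw [nonsing_inv_apply_not_isUnit _ hdet, zero_mulVec, zero_dotProduct]

lemma hamiltonian_dotProduct_add_dotProduct (A Q : Matrix k k ℝ) (B : Matrix k l ℝ)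
    (S : Matrix l l ℝ) (c : ℝ) (x y : k → ℝ) :
    (A *ᵥ x - B *ᵥ (S *ᵥ (Bᵀ *ᵥ y))) ⬝ᵥ y
        + x ⬝ᵥ (-((c • (1 : Matrix k k ℝ) + A)ᵀ *ᵥ y) - Q *ᵥ x)
      = -(c * (x ⬝ᵥ y)) - ((Q *ᵥ x) ⬝ᵥ x + (S *ᵥ (Bᵀ *ᵥ y)) ⬝ᵥ (Bᵀ *ᵥ y)) := by
  have hA : x ⬝ᵥ (Aᵀ *ᵥ y) = (A *ᵥ x) ⬝ᵥ y := by rw [dotProduct_mulVec, vecMul_transpose]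
  have hB : (S *ᵥ (Bᵀ *ᵥ y)) ⬝ᵥ (Bᵀ *ᵥ y) = (B *ᵥ (S *ᵥ (Bᵀ *ᵥ y))) ⬝ᵥ y := by
    rw [dotProduct_mulVec, vecMul_transpose]
  simp only [transpose_add, transpose_smul, transpose_one, add_mulVec, smul_mulVec, one_mulVec,
    sub_dotProduct, dotProduct_sub, dotProduct_neg, dotProduct_add, dotProduct_smul, smul_eq_mul,
    hA, hB, dotProduct_comm x (Q *ᵥ x)]
  ring

variable {t c : ℝ} {A Q : ℝ → Matrix k k ℝ} {B : ℝ → Matrix k l ℝ} {S : ℝ → Matrix l l ℝ}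
  {x y : ℝ → k → ℝ}

lemma isPrimitiveFrom_neg_exp_mul_dotProduct
    (hx : IsPrimitiveFrom t x fun s => A s *ᵥ x s - B s *ᵥ (S s *ᵥ ((B s)ᵀ *ᵥ y s)))
    (hy : IsPrimitiveFrom t y fun s =>
      -((c • (1 : Matrix k k ℝ) + A s)ᵀ *ᵥ y s) - Q s *ᵥ x s) :
    IsPrimitiveFrom t (fun s => -(Real.exp (c * s) * (x s ⬝ᵥ y s))) fun s => Real.exp (c * s) *
      ((Q s *ᵥ x s) ⬝ᵥ x s + (S s *ᵥ ((B s)ᵀ *ᵥ y s)) ⬝ᵥ ((B s)ᵀ *ᵥ y s)) := by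
  have hexp : IsPrimitiveFrom t (fun s => Real.exp (c * s)) fun s => Real.exp (c * s) * c :=
    .of_hasDerivAt (fun s => (hasDerivAt_const_mul c).exp) (by fun_prop)
  convert! (hexp.mul (hx.dotProduct hy)).neg using 2 with s
  rw [hamiltonian_dotProduct_add_dotProduct]
  ring

theorem stmt_8_general
    (hx : IsPrimitiveFrom t x fun s => A s *ᵥ x s - B s *ᵥ (S s *ᵥ ((B s)ᵀ *ᵥ y s)))
    (hy : IsPrimitiveFrom t y fun s =>
      -((c • (1 : Matrix k k ℝ) + A s)ᵀ *ᵥ y s) - Q s *ᵥ x s)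
    (hQ : ∀ᵐ s ∂volume.restrict (Set.Ici t), ∀ v, 0 ≤ (Q s *ᵥ v) ⬝ᵥ v)
    (hS : ∀ᵐ s ∂volume.restrict (Set.Ici t), ∀ v, 0 ≤ (S s *ᵥ v) ⬝ᵥ v)
    {p : ℝ}
    (hlim : Filter.Tendsto (fun s => Real.exp (c * s) * (x s ⬝ᵥ y s)) Filter.atTop (nhds p)) :
    IntegrableOn (fun s => Real.exp (c * s) *
        ((Q s *ᵥ x s) ⬝ᵥ x s + (S s *ᵥ ((B s)ᵀ *ᵥ y s)) ⬝ᵥ ((B s)ᵀ *ᵥ y s))) (Set.Ici t) ∧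
      ∫ s in Set.Ici t, Real.exp (c * s) *
        ((Q s *ᵥ x s) ⬝ᵥ x s + (S s *ᵥ ((B s)ᵀ *ᵥ y s)) ⬝ᵥ ((B s)ᵀ *ᵥ y s))
      = Real.exp (c * t) * (x t ⬝ᵥ y t) - p := by
  have hprim := isPrimitiveFrom_neg_exp_mul_dotProduct hx hy
  have hint := hprim.integrableOn_Ici_of_nonneg (by
    filter_upwards [hQ, hS] with s hQs hSs
    exact mul_nonneg (Real.exp_pos _).le (add_nonneg (hQs _) (hSs _))) hlim.neg
  refine ⟨hint, ?_⟩
  rw [hprim.integral_Ici_of_tendsto hint hlim.neg]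
  ring

end Hamiltonian

/-- Deterministic version of the energy identity (3.17) used in the proof of
the a priori estimate Lemma 3.5 for the Hamiltonian system: for the coupled
system `x' = A x - B R⁻¹ Bᵀ y`, `y' = -((2K)I + A)ᵀ y - Q x` with `Q ⪰ 0`,
`R ⪰ δI`, weighted square-integrable `x, y` and `e^{2KT}⟨x(T),y(T)⟩ → 0`,
one has `∫_t^∞ e^{2Ks}(⟨Qx,x⟩ + ⟨R⁻¹Bᵀy, Bᵀy⟩) ds = e^{2Kt}⟨x(t),y(t)⟩`. -/
theorem stmt_8 (n m : ℕ) (t K δ : ℝ) (ht : 0 ≤ t) (hδ : 0 < δ)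
    (A : ℝ → Matrix (Fin n) (Fin n) ℝ) (B : ℝ → Matrix (Fin n) (Fin m) ℝ)
    (Q : ℝ → Matrix (Fin n) (Fin n) ℝ) (R : ℝ → Matrix (Fin m) (Fin m) ℝ)
    (hA : ∀ i j, Measurable fun s => A s i j)
    (hB : ∀ i j, Measurable fun s => B s i j)
    (hQ : ∀ i j, Measurable fun s => Q s i j)
    (hR : ∀ i j, Measurable fun s => R s i j)
    (hQsym : ∀ᵐ s ∂(volume.restrict (Set.Ici t)), (Q s)ᵀ = Q s)
    (hRsym : ∀ᵐ s ∂(volume.restrict (Set.Ici t)), (R s)ᵀ = R s)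
    (hbd : ∃ L : ℝ, ∀ᵐ s ∂(volume.restrict (Set.Ici t)),
      (∀ v : Fin n → ℝ, (A s *ᵥ v) ⬝ᵥ (A s *ᵥ v) ≤ L^2 * (v ⬝ᵥ v)) ∧
      (∀ v : Fin m → ℝ, (B s *ᵥ v) ⬝ᵥ (B s *ᵥ v) ≤ L^2 * (v ⬝ᵥ v)) ∧
      (∀ v : Fin n → ℝ, (Q s *ᵥ v) ⬝ᵥ (Q s *ᵥ v) ≤ L^2 * (v ⬝ᵥ v)) ∧
      (∀ v : Fin m → ℝ, (R s *ᵥ v) ⬝ᵥ (R s *ᵥ v) ≤ L^2 * (v ⬝ᵥ v)))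
    (hQpsd : ∀ᵐ s ∂(volume.restrict (Set.Ici t)),
      ∀ v : Fin n → ℝ, 0 ≤ (Q s *ᵥ v) ⬝ᵥ v)
    (hRpd : ∀ᵐ s ∂(volume.restrict (Set.Ici t)),
      ∀ v : Fin m → ℝ, δ * (v ⬝ᵥ v) ≤ (R s *ᵥ v) ⬝ᵥ v)
    (x y : ℝ → (Fin n → ℝ))
    (hxint : ∀ T, t ≤ T → IntegrableOn (fun s =>
      A s *ᵥ x s - B s *ᵥ ((R s)⁻¹ *ᵥ ((B s)ᵀ *ᵥ y s))) (Set.Icc t T))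
    (hx : ∀ s, t ≤ s → x s = x t + ∫ r in t..s,
      (A r *ᵥ x r - B r *ᵥ ((R r)⁻¹ *ᵥ ((B r)ᵀ *ᵥ y r))))
    (hyint : ∀ T, t ≤ T → IntegrableOn (fun s =>
      -((((2*K) • (1 : Matrix (Fin n) (Fin n) ℝ) + A s)ᵀ) *ᵥ y s)
        - Q s *ᵥ x s) (Set.Icc t T))
    (hy : ∀ s, t ≤ s → y s = y t + ∫ r in t..s,
      (-((((2*K) • (1 : Matrix (Fin n) (Fin n) ℝ) + A r)ᵀ) *ᵥ y r) - Q r *ᵥ x r))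
    (hxL2 : IntegrableOn (fun s => Real.exp (2*K*s) * (x s ⬝ᵥ x s)) (Set.Ici t))
    (hyL2 : IntegrableOn (fun s => Real.exp (2*K*s) * (y s ⬝ᵥ y s)) (Set.Ici t))
    (hlim : Filter.Tendsto (fun T => Real.exp (2*K*T) * (x T ⬝ᵥ y T))
      Filter.atTop (nhds 0)) :
    ∫ s in Set.Ici t, Real.exp (2*K*s) *
        (((Q s *ᵥ x s) ⬝ᵥ x s)
          + (((R s)⁻¹ *ᵥ ((B s)ᵀ *ᵥ y s)) ⬝ᵥ ((B s)ᵀ *ᵥ y s)))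
      = Real.exp (2*K*t) * (x t ⬝ᵥ y t) := by
  have hRinv : ∀ᵐ s ∂volume.restrict (Set.Ici t), ∀ w, 0 ≤ ((R s)⁻¹ *ᵥ w) ⬝ᵥ w :=
    hRpd.mono fun s hRs => inv_mulVec_dotProduct_nonneg fun v =>
      (mul_nonneg hδ.le (Finset.sum_nonneg fun i _ => mul_self_nonneg (v i))).trans (hRs v)
  simpa only [sub_zero] using (stmt_8_general ⟨hxint, hx⟩ ⟨hyint, hy⟩ hQpsd hRinv hlim).2
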